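/- Let n ≥ 4 be even and let Q be the quiver of type D̃_n with vertex set {0,1,…,n} and arrows n→n−2, (n−1)→n−2, i→i−1 for 3 ≤ i ≤ n−2, 2→1 and 2→0. Then there exists an element Y of ℚ(x_0,…,x_n) such that for every extending vertex i ∈ {0, 1, n−1, n} and every j ≥ 0 one has Y·X^i_{j+n−2} = X^i_j + X^i_{j+2(n−2)}. -/

import Mathlib

/-- Arrow multiplicities of the quiver of type D̃_n on vertices `{0,…,n}` with arrows
`n → n−2`, `(n−1) → n−2`, `i → i−1` for `3 ≤ i ≤ n−2`, `2 → 1` and `2 → 0`. -/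
def multDtilde (n : ℕ) (s t : Fin (n+1)) : ℕ :=
  if (s.val = n ∧ t.val = n - 2) ∨ (s.val = n - 1 ∧ t.val = n - 2) ∨
     (3 ≤ s.val ∧ s.val ≤ n - 2 ∧ t.val + 1 = s.val) ∨
     (s.val = 2 ∧ t.val = 1) ∨ (s.val = 2 ∧ t.val = 0) then 1 else 0

/-!
Multiplying the sequences of the two leaves at each end of D̃_n turns the frieze into an
SL₂-tiling of a strip. Unimodularity of neighbouring `2 × 2` minors propagates a linear relation
between three entries both vertically and diagonally through the strip. At the two boundaries the
propagated relation says that a leaf `i` and its twin `i'` satisfy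
`X^i_j + X^i_{j+2} = α_j X^{i'}_{j+1}` with the same coefficients `α` at both ends, and going up one
way and down the other shows that `α` has period `n − 2`. The trace of the monodromy matrix of this
second order recurrence is the required `Y`; the twins come back to themselves after an even number
of steps. All divisions are legitimate because every term of the frieze is a quotient of polynomials
that are positive at `(1, …, 1)`.
-/

/-- The sequences `X v` satisfy the frieze recursion of the quiver with `mult s t` arrows from `s`
to `t`; the initial values `X v 0` are arbitrary. -/
def IsFrieze {V R : Type*} [Fintype V] [CommSemiring R] (mult : V → V → ℕ) (X : V → ℕ → R) : Prop :=
  ∀ v j, X v (j + 1) * X v j =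
    1 + (∏ s, X s (j + 1) ^ mult s v) * ∏ d, X d j ^ mult v d

section PositiveFractions

variable {A F k : Type*} [CommSemiring A] [Field F] [Algebra A F] [Semiring k] [PartialOrder k]
  {φ : A →+* k} {x y : F}

theorem algebraMap_ne_zero_of_map_pos [FaithfulSMul A F] {p : A} (hp : 0 < φ p) :
    algebraMap A F p ≠ 0 := by
  rw [Ne, FaithfulSMul.algebraMap_eq_zero_iff]
  rintro rfl
  exact hp.ne' (map_zero φ)

variable [IsStrictOrderedRing k]

variable (F) in
/-- The elements of `F` that are quotients of elements of `A` on which the ring homomorphism `φ`,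
for instance the evaluation of polynomials at a point, is positive. The recursion of a frieze
preserves this set, which does not contain `0`. -/
def positiveFractions (φ : A →+* k) : Submonoid F where
  carrier := {x | ∃ p q, 0 < φ p ∧ 0 < φ q ∧ x = algebraMap A F p / algebraMap A F q}
  one_mem' := ⟨1, 1, by simp, by simp, by simp⟩
  mul_mem' := by
    rintro _ _ ⟨p, q, hp, hq, rfl⟩ ⟨r, s, hr, hs, rfl⟩
    exact ⟨p * r, q * s, by simpa using mul_pos hp hr, by simpa using mul_pos hq hs,
      by simp only [map_mul, div_mul_div_comm]⟩

namespace positiveFractions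

theorem algebraMap_mem {p : A} (hp : 0 < φ p) : algebraMap A F p ∈ positiveFractions F φ :=
  ⟨p, 1, hp, by simp, by simp⟩

theorem div_mem (hx : x ∈ positiveFractions F φ) (hy : y ∈ positiveFractions F φ) :
    x / y ∈ positiveFractions F φ := by
  obtain ⟨p, q, hp, hq, rfl⟩ := hx
  obtain ⟨r, s, hr, hs, rfl⟩ := hy
  exact ⟨p * s, q * r, by simpa using mul_pos hp hs, by simpa using mul_pos hq hr,
    by simp only [map_mul, div_div_div_eq]⟩

variable [FaithfulSMul A F]

theorem add_mem (hx : x ∈ positiveFractions F φ) (hy : y ∈ positiveFractions F φ) :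
    x + y ∈ positiveFractions F φ := by
  obtain ⟨p, q, hp, hq, rfl⟩ := hx
  obtain ⟨r, s, hr, hs, rfl⟩ := hy
  refine ⟨p * s + q * r, q * s, ?_, by simpa using mul_pos hq hs, ?_⟩
  · simpa using add_pos (mul_pos hp hs) (mul_pos hq hr)
  · rw [div_add_div _ _ (algebraMap_ne_zero_of_map_pos hq) (algebraMap_ne_zero_of_map_pos hs)]
    simp only [map_mul, map_add]

theorem ne_zero (hx : x ∈ positiveFractions F φ) : x ≠ 0 := by
  obtain ⟨p, q, hp, hq, rfl⟩ := hx
  exact div_ne_zero (algebraMap_ne_zero_of_map_pos hp) (algebraMap_ne_zero_of_map_pos hq)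

theorem mem_of_isFrieze {V : Type*} [Fintype V] {mult : V → V → ℕ}
    (acyclic : WellFounded fun s v => mult s v ≠ 0) {X : V → ℕ → F}
    (hX : IsFrieze mult X) (hX0 : ∀ v, X v 0 ∈ positiveFractions F φ) (v : V) (j : ℕ) :
    X v j ∈ positiveFractions F φ := by
  induction j generalizing v with
  | zero => exact hX0 v
  | succ j ihj =>
    induction v using acyclic.induction with
    | _ v ihv =>
      rw [eq_div_of_mul_eq (ne_zero (ihj v)) (hX v j)]
      refine div_mem (add_mem (one_mem _) (mul_mem ?_ ?_)) (ihj v)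
      · refine prod_mem fun s _ => ?_
        by_cases hs : mult s v = 0
        · simp only [hs, pow_zero, one_mem]
        · exact pow_mem (ihv s hs) _
      · exact prod_mem fun d _ => pow_mem (ihj d) _

end positiveFractions

end PositiveFractions

section TransferMatrix

variable {R : Type*} [CommRing R] {α f : ℕ → R} {m : ℕ}

open Matrix

/-- The matrix taking `(f 0, f 1)` to `(f k, f (k + 1))` for every solution `f` of the recurrence
`f j + f (j + 2) = α j * f (j + 1)`. -/
def transferMatrix (α : ℕ → R) : ℕ → Matrix (Fin 2) (Fin 2) R
  | 0 => 1
  | k + 1 => !![0, 1; -1, α k] * transferMatrix α k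

theorem transferMatrix_mulVec (hf : ∀ j, f j + f (j + 2) = α j * f (j + 1)) (k : ℕ) :
    transferMatrix α k *ᵥ ![f 0, f 1] = ![f k, f (k + 1)] := by
  induction k with
  | zero => simp [transferMatrix]
  | succ k ih =>
    rw [transferMatrix, ← mulVec_mulVec, ih]
    ext i
    fin_cases i
    · simp [mulVec, dotProduct]
    · simp [mulVec, dotProduct, add_assoc, ← hf k]

theorem det_transferMatrix (α : ℕ → R) (k : ℕ) : (transferMatrix α k).det = 1 := by
  induction k with
  | zero => exact det_one
  | succ k ih => rw [transferMatrix, det_mul, ih, det_fin_two_of]; ring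

theorem transferMatrix_add_period (hα : Function.Periodic α m) (j : ℕ) :
    transferMatrix α (j + m) = transferMatrix α j * transferMatrix α m := by
  induction j with
  | zero => rw [zero_add, transferMatrix, one_mul]
  | succ j ih => rw [add_right_comm, transferMatrix, ih, hα, transferMatrix, mul_assoc]

theorem one_add_mul_self_of_det_eq_one {A : Matrix (Fin 2) (Fin 2) R} (hA : A.det = 1) :
    1 + A * A = A.trace • A := by
  nontriviality R
  have hCH := A.aeval_self_charpoly
  simp only [charpoly_fin_two, hA, map_add, map_sub, map_mul, map_pow, Polynomial.aeval_X,
    Polynomial.aeval_C, map_one, ← Algebra.smul_def] at hCH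
  rw [← sub_eq_zero, ← hCH]
  noncomm_ring

theorem trace_transferMatrix_mul (hα : Function.Periodic α m)
    (hf : ∀ j, f j + f (j + 2) = α j * f (j + 1)) (j : ℕ) :
    (transferMatrix α m).trace * f (j + m) = f j + f (j + 2 * m) := by
  have htrace : transferMatrix α j + transferMatrix α (j + 2 * m) =
      (transferMatrix α m).trace • transferMatrix α (j + m) := by
    rw [two_mul, ← add_assoc, transferMatrix_add_period hα, transferMatrix_add_period hα, mul_assoc,
      ← mul_one_add, one_add_mul_self_of_det_eq_one (det_transferMatrix α m), mul_smul_comm]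
  have hvec := congrArg (· *ᵥ ![f 0, f 1]) htrace
  simp only [add_mulVec, smul_mulVec, transferMatrix_mulVec hf] at hvec
  exact (congrFun hvec 0).symm

-- Following `σ` along the sequence turns the coupled system into a single scalar recurrence.
theorem trace_transferMatrix_mul_of_involutive {ι : Type*} {σ : ι → ι} (hσ : σ.Involutive)
    {s : Set ι} (hs : Set.MapsTo σ s s) {X : ι → ℕ → R} (hα : Function.Periodic α m)
    (hX : ∀ i ∈ s, ∀ j, X i j + X i (j + 2) = α j * X (σ i) (j + 1)) {i : ι} (hi : i ∈ s) (j : ℕ) :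
    (transferMatrix α m).trace * X (σ^[m] i) (j + m) = X i j + X i (j + 2 * m) := by
  have hrec : ∀ l, X (σ^[l + j] i) l + X (σ^[l + 2 + j] i) (l + 2) =
      α l * X (σ^[l + 1 + j] i) (l + 1) := fun l => by
    rw [add_right_comm l 2, add_right_comm l 1, Function.iterate_succ_apply',
      Function.iterate_succ_apply', hσ]
    exact hX _ (hs.iterate _ hi) l
  have hiter : ∀ l, σ^[l + 2 * j] i = σ^[l] i := fun l => by
    rw [Function.iterate_add_apply, hσ.iterate_two_mul, id]
  have htrace := trace_transferMatrix_mul (f := fun l => X (σ^[l + j] i) l) hα hrec j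
  rwa [show j + m + j = m + 2 * j by ring, show j + 2 * m + j = 2 * m + 2 * j by ring,
    ← two_mul, hiter, hiter, hσ.iterate_two_mul, hσ.iterate_two_mul, id] at htrace

end TransferMatrix

/-- A nowhere zero SL₂-tiling of the strip with rows `0, …, N + 2`, each of whose boundary rows is a
product of two sequences `a` with `a (j + 1) * a j = 1 + T 1 (j + 1)` at the bottom and
`a (j + 1) * a j = 1 + T (N + 1) j` at the top. -/
structure IsFoldedTiling {R : Type*} [CommSemiring R] (N : ℕ) (T : ℕ → ℕ → R) : Prop where
  ne_zero : ∀ k j, T k j ≠ 0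
  bottom : ∀ j, T 0 (j + 1) * T 0 j = (1 + T 1 (j + 1)) ^ 2
  unimodular : ∀ k ≤ N, ∀ j, T (k + 1) (j + 1) * T (k + 1) j = 1 + T (k + 2) (j + 1) * T k j
  top : ∀ j, T (N + 2) (j + 1) * T (N + 2) j = (1 + T (N + 1) j) ^ 2

namespace IsFoldedTiling

section NoZeroDivisors

variable {R : Type*} [CommRing R] [NoZeroDivisors R] {N k j : ℕ} {T : ℕ → ℕ → R} {c : R}

theorem add_eq_mul_vertical (hT : IsFoldedTiling N T) (h : T 0 j + T 2 (j + 2) = c * T 1 (j + 1))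
    (hk : k ≤ N) : T k j + T (k + 2) (j + 2) = c * T (k + 1) (j + 1) := by
  induction k with
  | zero => exact h
  | succ k ih =>
    apply mul_left_cancel₀ (hT.ne_zero (k + 1) (j + 1))
    linear_combination T (k + 2) (j + 1) * ih (by omega) + hT.unimodular k (by omega) j -
      hT.unimodular (k + 1) hk (j + 1)

theorem add_eq_mul_diagonal (hT : IsFoldedTiling N T) (h : T 0 j + T 2 j = c * T 1 j) (hk : k ≤ N) :
    T k (j + k) + T (k + 2) (j + k) = c * T (k + 1) (j + k) := by
  induction k with
  | zero => exact h
  | succ k ih =>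
    apply mul_left_cancel₀ (hT.ne_zero (k + 1) (j + k))
    linear_combination T (k + 2) (j + k + 1) * ih (by omega) + hT.unimodular k (by omega) (j + k) -
      hT.unimodular (k + 1) hk (j + k)

theorem top_coeff_of_bottom (hT : IsFoldedTiling N T)
    (h : c * T 0 (j + 1) = 2 + T 1 (j + 1) + T 1 (j + 2)) :
    c * T (N + 2) (j + 1) = 2 + T (N + 1) j + T (N + 1) (j + 1) := by
  have hfirst : T 0 j + T 2 (j + 2) = c * T 1 (j + 1) := by
    apply mul_left_cancel₀ (hT.ne_zero 0 (j + 1))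
    linear_combination hT.bottom j - hT.unimodular 0 N.zero_le (j + 1) - T 1 (j + 1) * h
  have hlast := hT.add_eq_mul_vertical hfirst le_rfl
  apply mul_left_cancel₀ (hT.ne_zero (N + 1) (j + 1))
  linear_combination hT.top (j + 1) - hT.unimodular N le_rfl j - T (N + 2) (j + 1) * hlast

theorem top_coeff_add_period_of_bottom (hT : IsFoldedTiling N T)
    (h : c * T 0 (j + 1) = 2 + T 1 (j + 1) + T 1 (j + 2)) :
    c * T (N + 2) (j + (N + 2) + 1) =
      2 + T (N + 1) (j + (N + 2)) + T (N + 1) (j + (N + 2) + 1) := by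
  have hfirst : T 0 (j + 2) + T 2 (j + 2) = c * T 1 (j + 2) := by
    apply mul_left_cancel₀ (hT.ne_zero 0 (j + 1))
    linear_combination hT.bottom (j + 1) - hT.unimodular 0 N.zero_le (j + 1) - T 1 (j + 2) * h
  have hlast := hT.add_eq_mul_diagonal hfirst le_rfl
  rw [add_right_comm j 2 N, add_assoc j N 2] at hlast
  apply mul_left_cancel₀ (hT.ne_zero (N + 1) (j + (N + 2)))
  linear_combination hT.top (j + (N + 2)) - hT.unimodular N le_rfl (j + (N + 2)) -
    T (N + 2) (j + (N + 2) + 1) * hlast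

end NoZeroDivisors

theorem exists_periodic_coeff {K : Type*} [Field K] {N : ℕ} {T : ℕ → ℕ → K}
    (hT : IsFoldedTiling N T) :
    ∃ α : ℕ → K, Function.Periodic α (N + 2) ∧
      (∀ j, α j * T 0 (j + 1) = 2 + T 1 (j + 1) + T 1 (j + 2)) ∧
      ∀ j, α j * T (N + 2) (j + 1) = 2 + T (N + 1) j + T (N + 1) (j + 1) := by
  let α : ℕ → K := fun j => (2 + T 1 (j + 1) + T 1 (j + 2)) / T 0 (j + 1)
  have hbottom : ∀ j, α j * T 0 (j + 1) = 2 + T 1 (j + 1) + T 1 (j + 2) :=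
    fun j => div_mul_cancel₀ _ (hT.ne_zero 0 (j + 1))
  have htop := fun j => hT.top_coeff_of_bottom (hbottom j)
  refine ⟨α, fun j => ?_, hbottom, htop⟩
  exact mul_right_cancel₀ (hT.ne_zero _ _)
    ((htop (j + (N + 2))).trans (hT.top_coeff_add_period_of_bottom (hbottom j)).symm)

end IsFoldedTiling

section Dtilde

variable {n : ℕ}

/-- The row of the vertex `v` of D̃_n after folding together the two leaves at each end:
`0` and `1` lie in row `0` (by truncated subtraction), `n - 1` and `n` in row `n - 2`. -/
def dtildeLevel (n : ℕ) (v : Fin (n + 1)) : ℕ := min (v.val - 1) (n - 2)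

/-- The involution of D̃_n that exchanges the two leaves at each end. -/
def dtildeTwin (n : ℕ) (v : Fin (n + 1)) : Fin (n + 1) where
  val := if n - 1 ≤ v.val then 2 * n - 1 - v.val else if v.val ≤ 1 then 1 - v.val else v.val
  isLt := by split_ifs <;> omega

/-- The extending vertices of D̃_n. -/
def dtildeExtending (n : ℕ) : Set (Fin (n + 1)) :=
  {i | i.val = 0 ∨ i.val = 1 ∨ i.val = n - 1 ∨ i.val = n}

theorem mem_dtildeExtending {i : Fin (n + 1)} :
    i ∈ dtildeExtending n ↔ i.val = 0 ∨ i.val = 1 ∨ i.val = n - 1 ∨ i.val = n :=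
  Iff.rfl

theorem multDtilde_eq_ite_level (hn : 4 ≤ n) (s t : Fin (n + 1)) :
    multDtilde n s t = if dtildeLevel n s = dtildeLevel n t + 1 then 1 else 0 := by
  unfold multDtilde dtildeLevel
  refine if_congr ?_ rfl rfl
  omega

theorem wellFounded_multDtilde_ne_zero (hn : 4 ≤ n) :
    WellFounded fun s t => multDtilde n s t ≠ 0 := by
  refine Subrelation.wf (r := (· > ·)) (fun {s t} h => ?_) wellFounded_gt
  rw [multDtilde_eq_ite_level hn, ite_ne_right_iff] at h
  rw [gt_iff_lt, Fin.lt_def]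
  unfold dtildeLevel at h
  omega

theorem dtildeTwin_involutive (hn : 4 ≤ n) : (dtildeTwin n).Involutive := fun v => by
  ext
  simp only [dtildeTwin]
  split_ifs <;> omega

theorem mapsTo_dtildeTwin_extending (n : ℕ) :
    Set.MapsTo (dtildeTwin n) (dtildeExtending n) (dtildeExtending n) := fun v hv => by
  simp only [mem_dtildeExtending, dtildeTwin] at hv ⊢
  split_ifs <;> omega

theorem dtildeLevel_twin (v : Fin (n + 1)) :
    dtildeLevel n (dtildeTwin n v) = dtildeLevel n v := by
  simp only [dtildeLevel, dtildeTwin]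
  split_ifs <;> omega

theorem dtildeLevel_of_mem_extending {i : Fin (n + 1)} (hi : i ∈ dtildeExtending n) :
    dtildeLevel n i = 0 ∨ dtildeLevel n i = n - 2 := by
  rw [mem_dtildeExtending] at hi
  unfold dtildeLevel
  omega

section LevelProd

variable {M : Type*} [CommMonoid M] {X : Fin (n + 1) → ℕ → M}

/-- The product of the sequences of all vertices of level `k`. -/
def levelProd (X : Fin (n + 1) → ℕ → M) (k j : ℕ) : M :=
  ∏ v with dtildeLevel n v = k, X v j

theorem levelProd_eq_one {k : ℕ} (hk : n - 2 < k) (j : ℕ) : levelProd X k j = 1 := by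
  refine Finset.prod_eq_one fun v hv => ?_
  rw [Finset.mem_filter_univ, dtildeLevel] at hv
  omega

theorem levelProd_of_interior {v : Fin (n + 1)} {k : ℕ} (hv : dtildeLevel n v = k) (h0 : 0 < k)
    (hk : k < n - 2) (j : ℕ) : levelProd X k j = X v j := by
  have hfilter : ({w | dtildeLevel n w = k} : Finset (Fin (n + 1))) = {v} := by
    ext w
    rw [Finset.mem_filter_univ, Finset.mem_singleton, Fin.ext_iff]
    unfold dtildeLevel at *
    omega
  rw [levelProd, hfilter, Finset.prod_singleton]

theorem levelProd_of_mem_extending (hn : 4 ≤ n) {i : Fin (n + 1)} (hi : i ∈ dtildeExtending n)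
    (j : ℕ) : levelProd X (dtildeLevel n i) j = X i j * X (dtildeTwin n i) j := by
  rw [mem_dtildeExtending] at hi
  have hne : i ≠ dtildeTwin n i := by
    rw [Ne, Fin.ext_iff]
    simp only [dtildeTwin]
    split_ifs <;> omega
  have hfilter : ({w | dtildeLevel n w = dtildeLevel n i} : Finset (Fin (n + 1))) =
      {i, dtildeTwin n i} := by
    ext w
    rw [Finset.mem_filter_univ, Finset.mem_insert, Finset.mem_singleton, Fin.ext_iff, Fin.ext_iff]
    simp only [dtildeLevel, dtildeTwin]
    split_ifs <;> omega
  rw [levelProd, hfilter, Finset.prod_pair hne]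

end LevelProd

section Recursion

variable {R : Type*} [CommSemiring R] {X : Fin (n + 1) → ℕ → R}

theorem IsFrieze.mul_eq_levelProd (hn : 4 ≤ n) (hX : IsFrieze (multDtilde n) X) (v : Fin (n + 1))
    (j : ℕ) : X v (j + 1) * X v j = 1 + levelProd X (dtildeLevel n v + 1) (j + 1) *
      ∏ d with dtildeLevel n v = dtildeLevel n d + 1, X d j := by
  simp only [hX v j, multDtilde_eq_ite_level hn, pow_ite, pow_one, pow_zero, levelProd,
    Finset.prod_filter]

theorem IsFrieze.mul_of_level_eq_zero (hn : 4 ≤ n) (hX : IsFrieze (multDtilde n) X)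
    {v : Fin (n + 1)} (hv : dtildeLevel n v = 0) (j : ℕ) :
    X v (j + 1) * X v j = 1 + levelProd X 1 (j + 1) := by
  simp [hX.mul_eq_levelProd hn, hv]

theorem IsFrieze.mul_of_level_eq_succ (hn : 4 ≤ n) (hX : IsFrieze (multDtilde n) X)
    {v : Fin (n + 1)} {k : ℕ} (hv : dtildeLevel n v = k + 1) (j : ℕ) :
    X v (j + 1) * X v j = 1 + levelProd X (k + 2) (j + 1) * levelProd X k j := by
  simp only [hX.mul_eq_levelProd hn, hv, add_left_inj, eq_comm (a := k), levelProd]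

theorem IsFrieze.mul_of_level_eq_last {N : ℕ} {X : Fin (N + 4 + 1) → ℕ → R}
    (hX : IsFrieze (multDtilde (N + 4)) X) {v : Fin (N + 4 + 1)}
    (hv : dtildeLevel (N + 4) v = N + 2) (j : ℕ) :
    X v (j + 1) * X v j = 1 + levelProd X (N + 1) j := by
  rw [hX.mul_of_level_eq_succ (by omega) hv, levelProd_eq_one (by omega), one_mul]

theorem levelProd_mul_of_mem_extending (hn : 4 ≤ n) {i : Fin (n + 1)} (hi : i ∈ dtildeExtending n)
    {j : ℕ} {c : R} (hc : ∀ v, dtildeLevel n v = dtildeLevel n i → X v (j + 1) * X v j = c) :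
    levelProd X (dtildeLevel n i) (j + 1) * levelProd X (dtildeLevel n i) j = c ^ 2 := by
  rw [levelProd_of_mem_extending hn hi, levelProd_of_mem_extending hn hi, mul_mul_mul_comm,
    hc i rfl, hc _ (dtildeLevel_twin i), sq]

end Recursion

theorem isFoldedTiling_levelProd {R : Type*} [CommSemiring R] [NoZeroDivisors R] [Nontrivial R]
    {N : ℕ} {X : Fin (N + 4 + 1) → ℕ → R} (hX : IsFrieze (multDtilde (N + 4)) X)
    (hX0 : ∀ v j, X v j ≠ 0) :
    IsFoldedTiling N (levelProd X) where
  ne_zero k j := Finset.prod_ne_zero_iff.mpr fun v _ => hX0 v j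
  bottom j := levelProd_mul_of_mem_extending (i := 0) (by omega) (.inl rfl)
    fun _ hv => hX.mul_of_level_eq_zero (by omega) (hv.trans (by simp [dtildeLevel])) j
  unimodular k hk j := by
    have hlevel : dtildeLevel (N + 4) ⟨k + 2, by omega⟩ = k + 1 := by
      simp only [dtildeLevel]
      omega
    rw [levelProd_of_interior hlevel k.succ_pos (by omega),
      levelProd_of_interior hlevel k.succ_pos (by omega)]
    exact hX.mul_of_level_eq_succ (by omega) hlevel j
  top j := by
    have hlevel : dtildeLevel (N + 4) (Fin.last _) = N + 2 := by
      simp [dtildeLevel]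
    rw [← hlevel]
    exact levelProd_mul_of_mem_extending (by omega) (by simp [mem_dtildeExtending])
      fun _ hv => hX.mul_of_level_eq_last (hv.trans hlevel) j

theorem exists_periodic_coeff_of_isFrieze {K : Type*} [Field K] (hn : 4 ≤ n)
    {X : Fin (n + 1) → ℕ → K} (hX : IsFrieze (multDtilde n) X) (hX0 : ∀ v j, X v j ≠ 0) :
    ∃ α : ℕ → K, Function.Periodic α (n - 2) ∧ ∀ i ∈ dtildeExtending n, ∀ j,
      X i j + X i (j + 2) = α j * X (dtildeTwin n i) (j + 1) := by
  obtain ⟨N, rfl⟩ := Nat.exists_eq_add_of_le' hn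
  obtain ⟨α, hα, hbottom, htop⟩ := (isFoldedTiling_levelProd hX hX0).exists_periodic_coeff
  refine ⟨α, hα, fun i hi j => mul_left_cancel₀ (hX0 i (j + 1)) ?_⟩
  have hlevel := levelProd_of_mem_extending (X := X) hn hi (j + 1)
  rcases dtildeLevel_of_mem_extending hi with hi0 | hi1
  · have hrec := hX.mul_of_level_eq_zero hn hi0
    rw [hi0] at hlevel
    linear_combination hrec j + hrec (j + 1) - hbottom j + α j * hlevel
  · have hrec := hX.mul_of_level_eq_last hi1
    rw [hi1, Nat.add_sub_cancel_right (N + 2) 2] at hlevel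
    linear_combination hrec j + hrec (j + 1) - htop j + α j * hlevel

end Dtilde

theorem stmt_14_general {K : Type*} [Field K] {n : ℕ} (hn : 4 ≤ n) {X : Fin (n + 1) → ℕ → K}
    (hX : IsFrieze (multDtilde n) X) (hX0 : ∀ v j, X v j ≠ 0) :
    ∃ Y : K, ∀ i ∈ dtildeExtending n, ∀ j,
      Y * X ((dtildeTwin n)^[n - 2] i) (j + (n - 2)) = X i j + X i (j + 2 * (n - 2)) := by
  obtain ⟨α, hα, hrec⟩ := exists_periodic_coeff_of_isFrieze hn hX hX0
  exact ⟨_, fun i hi => trace_transferMatrix_mul_of_involutive (dtildeTwin_involutive hn)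
    (mapsTo_dtildeTwin_extending n) hα hrec hi⟩

/-- Let `n ≥ 4` be even and `Q` the above quiver of type D̃_n. Then there is
an element `Y` of `ℚ(x_0,…,x_n)` such that for every extending vertex `i ∈ {0,1,n−1,n}`
and every `j ≥ 0` one has `Y·X^i_{j+n−2} = X^i_j + X^i_{j+2(n−2)}`. -/
theorem stmt_14 (n : ℕ) (hn : 4 ≤ n) (heven : Even n)
    -- the frieze sequences
    (X : Fin (n+1) → ℕ → FractionRing (MvPolynomial (Fin (n+1)) ℚ))
    (hX0 : ∀ v, X v 0 = algebraMap (MvPolynomial (Fin (n+1)) ℚ)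
      (FractionRing (MvPolynomial (Fin (n+1)) ℚ)) (MvPolynomial.X v))
    (hXrec : ∀ v (j : ℕ), X v (j+1) * X v j =
      1 + (∏ s : Fin (n+1), X s (j+1) ^ multDtilde n s v) *
          (∏ d : Fin (n+1), X d j ^ multDtilde n v d)) :
    ∃ Y : FractionRing (MvPolynomial (Fin (n+1)) ℚ),
      ∀ i : Fin (n+1), (i.val = 0 ∨ i.val = 1 ∨ i.val = n - 1 ∨ i.val = n) →
        ∀ j : ℕ, Y * X i (j + (n - 2)) = X i j + X i (j + 2 * (n - 2)) := by
  have hpos : ∀ v j, X v j ∈ positiveFractions _ (MvPolynomial.eval (1 : Fin (n+1) → ℚ)) :=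
    positiveFractions.mem_of_isFrieze (wellFounded_multDtilde_ne_zero hn) hXrec
      fun v => hX0 v ▸ positiveFractions.algebraMap_mem (by simp)
  have htwin : (dtildeTwin n)^[n - 2] = id :=
    (dtildeTwin_involutive hn).iterate_even (heven.tsub even_two)
  simpa only [htwin, id, mem_dtildeExtending] using
    stmt_14_general hn hXrec fun v j => positiveFractions.ne_zero (hpos v j)
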